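/- Every probability vector π on {(0,0),(0,1),(1,0),(1,1)} with nonnegative entries summing to 1 that satisfies πM = π has π(0,1) + π(1,0) = 2pq(1−a)/( (p+q)[p(1−a) + (1−q)a + q] ). (This is the paper's time-averaged reconstruction error P_E for the two-state BDMP source under the randomized stationary policy, eq. (37).) -/

import Mathlib

/-!
The choice between copying the new source state and keeping the old reconstruction is independent
of the source. Hence the source marginal of a joint law `π` evolves by `P` alone, while the
reconstruction marginal is pulled towards the source marginal with weight `a`; at stationarity the
two agree. For two states, equal marginals mean `π (0, 1) = π (1, 0)`, and the balance equation at
`(0, 1)`, where copying is impossible, determines this common value from the stationary law of the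
source.
-/

open Matrix

section Marginals

variable {α R : Type*} [Fintype α] [AddCommMonoid R]

/-- The law of the source component `x` under a joint law `π` of the pair `(x, x̂)`. -/
def sourceMarginal (π : α × α → R) (x : α) : R := ∑ x', π (x, x')

/-- The law of the reconstruction component `x̂` under a joint law `π` of the pair `(x, x̂)`. -/
def reconstructionMarginal (π : α × α → R) (x' : α) : R := ∑ x, π (x, x')

theorem sum_sourceMarginal (π : α × α → R) : ∑ x, sourceMarginal π x = ∑ s, π s :=
  (Fintype.sum_prod_type π).symm

theorem apply_zero_one_eq_apply_one_zero_of_marginals_eq [IsRightCancelAdd R]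
    {π : Fin 2 × Fin 2 → R} (h : reconstructionMarginal π = sourceMarginal π) :
    π (0, 1) = π (1, 0) := by
  have h_one := congrFun h 1
  simp only [reconstructionMarginal, sourceMarginal, Fin.sum_univ_two] at h_one
  exact add_right_cancel h_one

end Marginals

section JointChain

variable {α R : Type*} [DecidableEq α] [CommRing R]

/-- The kernel of the joint source–reconstruction chain under the randomized stationary policy: the
source moves by `P`, and the reconstruction is set to the new source state with weight `a` and kept
with weight `1 - a`. Rows are indexed by the current pair, so laws evolve by
`π ↦ π ᵥ* jointKernel P a`. -/
def jointKernel (P : Matrix α α R) (a : R) : Matrix (α × α) (α × α) R :=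
  of fun s t => P s.1 t.1 *
    (a * (if t.2 = t.1 then 1 else 0) + (1 - a) * (if t.2 = s.2 then 1 else 0))

variable [Fintype α] {P : Matrix α α R} {a : R} {π : α × α → R}

theorem vecMul_jointKernel_apply (P : Matrix α α R) (a : R) (π : α × α → R) (y y' : α) :
    (π ᵥ* jointKernel P a) (y, y') =
      a * (if y' = y then (sourceMarginal π ᵥ* P) y else 0) +
        (1 - a) * ((fun x => π (x, y')) ᵥ* P) y := by
  have summand (x x' : α) : π (x, x') * jointKernel P a (x, x') (y, y') =
      a * (if y' = y then π (x, x') * P x y else 0) +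
        (1 - a) * (if y' = x' then π (x, x') * P x y else 0) := by
    simp only [jointKernel, of_apply]
    split_ifs <;> ring
  simp only [vecMul, dotProduct, Fintype.sum_prod_type, summand, Finset.sum_add_distrib,
    ← Finset.mul_sum, Finset.sum_ite_eq, Finset.mem_univ, if_true, sourceMarginal, Finset.sum_mul]
  split_ifs <;> simp only [Finset.sum_const_zero]

theorem sourceMarginal_vecMul_jointKernel (P : Matrix α α R) (a : R) (π : α × α → R) :
    sourceMarginal (π ᵥ* jointKernel P a) = sourceMarginal π ᵥ* P := by
  ext y
  have keep : ∑ y', ((fun x => π (x, y')) ᵥ* P) y = (sourceMarginal π ᵥ* P) y := by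
    simp only [vecMul, dotProduct, sourceMarginal, Finset.sum_mul]
    exact Finset.sum_comm
  calc sourceMarginal (π ᵥ* jointKernel P a) y
      = a * (sourceMarginal π ᵥ* P) y + (1 - a) * (sourceMarginal π ᵥ* P) y := by
        rw [sourceMarginal]
        simp only [vecMul_jointKernel_apply, Finset.sum_add_distrib, ← Finset.mul_sum, keep,
          Finset.sum_ite_eq', Finset.mem_univ, if_true]
    _ = (sourceMarginal π ᵥ* P) y := by ring

theorem reconstructionMarginal_vecMul_jointKernel (hP : P *ᵥ 1 = 1) (a : R) (π : α × α → R) :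
    reconstructionMarginal (π ᵥ* jointKernel P a) =
      a • (sourceMarginal π ᵥ* P) + (1 - a) • reconstructionMarginal π := by
  ext y'
  have keep : ∑ y, ((fun x => π (x, y')) ᵥ* P) y = reconstructionMarginal π y' := by
    rw [← dotProduct_one, ← dotProduct_mulVec, hP, dotProduct_one, reconstructionMarginal]
  rw [reconstructionMarginal]
  simp only [vecMul_jointKernel_apply, Finset.sum_add_distrib, ← Finset.mul_sum, keep,
    Finset.sum_ite_eq, Finset.mem_univ, if_true, Pi.add_apply, Pi.smul_apply, smul_eq_mul]

theorem sourceMarginal_vecMul_of_stationary (hπ : π ᵥ* jointKernel P a = π) :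
    sourceMarginal π ᵥ* P = sourceMarginal π := by
  rw [← sourceMarginal_vecMul_jointKernel P a, hπ]

theorem reconstructionMarginal_eq_sourceMarginal_of_stationary [NoZeroDivisors R]
    (hP : P *ᵥ 1 = 1) (ha : a ≠ 0) (hπ : π ᵥ* jointKernel P a = π) :
    reconstructionMarginal π = sourceMarginal π := by
  have balance := reconstructionMarginal_vecMul_jointKernel hP a π
  rw [hπ, sourceMarginal_vecMul_of_stationary hπ] at balance
  ext x
  have balance_x : reconstructionMarginal π x =
      a * sourceMarginal π x + (1 - a) * reconstructionMarginal π x := congrFun balance x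
  exact mul_left_cancel₀ ha (by linear_combination balance_x)

theorem apply_eq_of_stationary_of_ne (hπ : π ᵥ* jointKernel P a = π) {x x' : α} (hx : x' ≠ x) :
    π (x, x') = (1 - a) * ((fun y => π (y, x')) ᵥ* P) x := by
  have balance := vecMul_jointKernel_apply P a π x x'
  rwa [hπ, if_neg hx, mul_zero, zero_add] at balance

end JointChain

section TwoStates

variable {R : Type*} [CommRing R]

/-- The transition matrix of the two-state Birth-Death source, which leaves `0` with weight `p` and
leaves `1` with weight `q`. -/
def birthDeath (p q : R) : Matrix (Fin 2) (Fin 2) R := !![1 - p, p; q, 1 - q]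

theorem birthDeath_mulVec_one (p q : R) : birthDeath p q *ᵥ 1 = 1 := by
  ext x
  fin_cases x <;> simp [birthDeath, mulVec, dotProduct, Fin.sum_univ_two]

theorem vecMul_birthDeath_zero (p q : R) (μ : Fin 2 → R) :
    (μ ᵥ* birthDeath p q) 0 = μ 0 * (1 - p) + μ 1 * q := by
  simp [birthDeath, vecMul, dotProduct, Fin.sum_univ_two]

theorem add_mul_apply_one_of_vecMul_birthDeath_eq {p q : R} {μ : Fin 2 → R}
    (hμ : μ ᵥ* birthDeath p q = μ) : (p + q) * μ 1 = p * ∑ x, μ x := by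
  have balance := vecMul_birthDeath_zero p q μ
  rw [hμ] at balance
  rw [Fin.sum_univ_two]
  linear_combination -balance

theorem mul_apply_zero_one_of_stationary [NoZeroDivisors R] {p q a : R} {π : Fin 2 × Fin 2 → R}
    (ha : a ≠ 0) (hπ : π ᵥ* jointKernel (birthDeath p q) a = π) :
    (p * (1 - a) + (1 - q) * a + q) * π (0, 1) = (1 - a) * q * sourceMarginal π 1 := by
  have balance := apply_eq_of_stationary_of_ne hπ (one_ne_zero : (1 : Fin 2) ≠ 0)
  rw [vecMul_birthDeath_zero] at balance
  have marginals := congrFun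
    (reconstructionMarginal_eq_sourceMarginal_of_stationary (birthDeath_mulVec_one p q) ha hπ) 1
  rw [reconstructionMarginal, Fin.sum_univ_two] at marginals
  linear_combination balance + (1 - a) * q * marginals

end TwoStates

theorem stmt_4_general {K : Type*} [Field K] {p q a : K} (hpq : p + q ≠ 0) (ha : a ≠ 0)
    (hD : p * (1 - a) + (1 - q) * a + q ≠ 0) {P : Fin 2 → Fin 2 → K}
    (hP00 : P 0 0 = 1 - p) (hP01 : P 0 1 = p) (hP10 : P 1 0 = q) (hP11 : P 1 1 = 1 - q)
    {M : (Fin 2 × Fin 2) → (Fin 2 × Fin 2) → K}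
    (hM : ∀ s t, M s t =
      P s.1 t.1 * (a * (if t.2 = t.1 then 1 else 0) + (1 - a) * (if t.2 = s.2 then 1 else 0)))
    {π : Fin 2 × Fin 2 → K} (hsum : ∑ s : Fin 2 × Fin 2, π s = 1)
    (hstat : ∀ t, ∑ s : Fin 2 × Fin 2, π s * M s t = π t) :
    π (0, 1) + π (1, 0) =
      2 * p * q * (1 - a) / ((p + q) * (p * (1 - a) + (1 - q) * a + q)) := by
  obtain rfl : P = birthDeath p q := by
    ext x y
    fin_cases x <;> fin_cases y <;> assumption
  obtain rfl : M = jointKernel (birthDeath p q) a := funext₂ hM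
  have hπ : π ᵥ* jointKernel (birthDeath p q) a = π := funext hstat
  have symm := apply_zero_one_eq_apply_one_zero_of_marginals_eq
    (reconstructionMarginal_eq_sourceMarginal_of_stationary (birthDeath_mulVec_one p q) ha hπ)
  have source_one := add_mul_apply_one_of_vecMul_birthDeath_eq
    (sourceMarginal_vecMul_of_stationary hπ)
  rw [sum_sourceMarginal, hsum, mul_one] at source_one
  rw [← symm, eq_div_iff (mul_ne_zero hpq hD)]
  linear_combination 2 * (p + q) * mul_apply_zero_one_of_stationary ha hπ +
    2 * (1 - a) * q * source_one

/-- Eq. (37) of the paper: any stationary distribution of the joint source–reconstruction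
chain for the two-state Birth-Death source under the randomized stationary policy has
error probability π(0,1) + π(1,0) = 2pq(1−a)/((p+q)[p(1−a) + (1−q)a + q]). -/
theorem stmt_4 (p q a : ℝ) (hp : 0 < p) (hp' : p < 1) (hq : 0 < q) (hq' : q < 1)
    (ha : 0 < a) (ha' : a ≤ 1)
    (P : Fin 2 → Fin 2 → ℝ)
    (hP00 : P 0 0 = 1 - p) (hP01 : P 0 1 = p) (hP10 : P 1 0 = q) (hP11 : P 1 1 = 1 - q)
    (M : (Fin 2 × Fin 2) → (Fin 2 × Fin 2) → ℝ)
    (hM : ∀ s t, M s t =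
      P s.1 t.1 * (a * (if t.2 = t.1 then 1 else 0) + (1 - a) * (if t.2 = s.2 then 1 else 0)))
    (pi : Fin 2 × Fin 2 → ℝ)
    (hnn : ∀ s, 0 ≤ pi s) (hsum : ∑ s : Fin 2 × Fin 2, pi s = 1)
    (hstat : ∀ t, ∑ s : Fin 2 × Fin 2, pi s * M s t = pi t) :
    pi (0, 1) + pi (1, 0) =
      2 * p * q * (1 - a) / ((p + q) * (p * (1 - a) + (1 - q) * a + q)) := by
  have hD : 0 < p * (1 - a) + (1 - q) * a + q := by
    have := sub_nonneg.2 ha'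
    have := sub_pos.2 hq'
    positivity
  exact stmt_4_general (add_pos hp hq).ne' ha.ne' hD.ne' hP00 hP01 hP10 hP11 hM hsum hstat
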